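/- Suppose B divides K and let the uniform batch grid be t_b = (b−1)(K/B) + 1 for b ∈ [B+1]; for each k ∈ [K], let b_k = t_b where b is the unique index with t_b ≤ k < t_{b+1}. Define the set C = {(k,h) ∈ [K] × [H] : √(φ_h^{kᵀ} (Λ_h^{b_k})^{−1} φ_h^k) > 2 √(φ_h^{kᵀ} (Λ_h^k)^{−1} φ_h^k)}. Then |C| ≤ d H K log(K/d + 1)/(2 B log 2). -/

import Mathlib

open Matrix

/-!
For positive definite matrices both `det A` and `det A * xᵀ A⁻¹ x = det (A + x xᵀ) - det A` increase
in the Loewner order; for the latter, a rank-one update reduces the claim to the nonnegativity of a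
`2 × 2` Gram determinant. Hence a drop of `√(xᵀ A⁻¹ x)` by a factor `r` between the start of a batch
and an index inside it forces `log det` to grow by at least `2 log r` over that batch. The total
growth of `log det` is at most `d log (K / d + 1)` by AM-GM for the eigenvalues, so few batches grow
that much, and each of them contains few indices.
-/

open Finset
open scoped MatrixOrder

section LoewnerOrder

variable {n : Type*}

theorem posSemidef_vecMulVec_self [Finite n] (v : n → ℝ) : (vecMulVec v v).PosSemidef := by
  simpa using posSemidef_vecMulVec_self_star v

theorem monotoneOn_posDef_of_le_add_vecMulVec [Finite n] {α : Type*} [Preorder α]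
    {f : Matrix n n ℝ → α}
    (hf : ∀ A : Matrix n n ℝ, A.PosDef → ∀ v, f A ≤ f (A + vecMulVec v v)) :
    MonotoneOn f {A | A.PosDef} := by
  intro A hA C _ hAC
  obtain ⟨m, w, hw⟩ := posSemidef_iff_eq_sum_vecMulVec.mp (le_iff.mp hAC)
  have le_add_sum (s : Finset (Fin m)) : f A ≤ f (A + ∑ i ∈ s, vecMulVec (w i) (w i)) := by
    induction s using Finset.induction_on with
    | empty => simp
    | insert i s hi ih =>
      have hs : (A + ∑ j ∈ s, vecMulVec (w j) (w j)).PosDef :=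
        hA.add_posSemidef (posSemidef_sum s fun j _ ↦ posSemidef_vecMulVec_self (w j))
      rw [sum_insert hi, add_comm (vecMulVec _ _), ← add_assoc]
      exact ih.trans (hf _ hs (w i))
  simp only [star_trivial] at hw
  simpa only [← hw, add_sub_cancel] using le_add_sum univ

theorem det_add_vecMulVec {R : Type*} [CommRing R] [Fintype n] [DecidableEq n] {A : Matrix n n R}
    (hA : IsUnit A.det) (u v : n → R) :
    (A + vecMulVec u v).det = A.det * (1 + v ⬝ᵥ A⁻¹ *ᵥ u) := by
  rw [vecMulVec_eq Unit, det_add_replicateCol_mul_replicateRow hA, Matrix.mul_assoc,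
    ← replicateCol_mulVec, det_unique (n := Unit)]
  rfl

theorem det_one_add_fin_two {R : Type*} [CommRing R] (S : Matrix (Fin 2) (Fin 2) R) :
    (1 + S).det = 1 + S.trace + S.det := by
  simp only [det_fin_two, trace_fin_two, Matrix.add_apply, one_apply_eq, ne_eq, zero_ne_one,
    one_ne_zero, not_false_eq_true, one_apply_ne, zero_add]
  ring

variable [Fintype n] [DecidableEq n] {A C : Matrix n n ℝ}

theorem dotProduct_inv_mulVec_nonneg (hA : A.PosSemidef) (x : n → ℝ) : 0 ≤ x ⬝ᵥ A⁻¹ *ᵥ x := by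
  simpa using hA.inv.dotProduct_mulVec_nonneg x

theorem det_add_vecMulVec_add_det_add_vecMulVec_le (hA : A.PosDef) (u v : n → ℝ) :
    (A + vecMulVec u u).det + (A + vecMulVec v v).det ≤
      (A + vecMulVec u u + vecMulVec v v).det + A.det := by
  have hdet : IsUnit A.det := hA.det_pos.ne'.isUnit
  let U : Matrix (Fin 2) n ℝ := of ![u, v]
  have hU : vecMulVec u u + vecMulVec v v = Uᵀ * U := by
    ext i j
    simp [U, mul_apply, vecMulVec_apply]
  have hS : (U * A⁻¹ * Uᵀ).PosSemidef := by
    simpa using hA.inv.posSemidef.mul_mul_conjTranspose_same U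
  have htrace : (U * A⁻¹ * Uᵀ).trace = u ⬝ᵥ A⁻¹ *ᵥ u + v ⬝ᵥ A⁻¹ *ᵥ v := by
    rw [trace_fin_two, Matrix.mul_assoc]
    rfl
  rw [add_assoc A, hU, det_add_mul _ _ hdet, det_add_vecMulVec hdet, det_add_vecMulVec hdet,
    det_one_add_fin_two, htrace]
  linarith [mul_nonneg hA.det_pos.le hS.det_nonneg]

theorem monotoneOn_det_posDef : MonotoneOn (det : Matrix n n ℝ → ℝ) {A | A.PosDef} :=
  monotoneOn_posDef_of_le_add_vecMulVec fun A hA v ↦ by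
    rw [det_add_vecMulVec hA.det_pos.ne'.isUnit]
    exact le_mul_of_one_le_right hA.det_pos.le
      (le_add_of_nonneg_right (dotProduct_inv_mulVec_nonneg hA.posSemidef v))

theorem monotoneOn_det_mul_dotProduct_inv_mulVec_posDef (x : n → ℝ) :
    MonotoneOn (fun A : Matrix n n ℝ ↦ A.det * (x ⬝ᵥ A⁻¹ *ᵥ x)) {A | A.PosDef} :=
  monotoneOn_posDef_of_le_add_vecMulVec fun A hA v ↦ by
    have det_mul_eq {M : Matrix n n ℝ} (hM : M.PosDef) :
        M.det * (x ⬝ᵥ M⁻¹ *ᵥ x) = (M + vecMulVec x x).det - M.det := by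
      rw [det_add_vecMulVec hM.det_pos.ne'.isUnit]
      ring
    rw [det_mul_eq hA, det_mul_eq (hA.add_posSemidef (posSemidef_vecMulVec_self v))]
    linarith [det_add_vecMulVec_add_det_add_vecMulVec_le hA v x]

theorem sq_mul_det_le_det_of_mul_sqrt_lt_sqrt (hA : A.PosDef) (hC : C.PosDef) (hAC : A ≤ C)
    {r : ℝ} (hr : 0 ≤ r) {x : n → ℝ} (h : r * √(x ⬝ᵥ C⁻¹ *ᵥ x) < √(x ⬝ᵥ A⁻¹ *ᵥ x)) :
    r ^ 2 * A.det ≤ C.det := by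
  have hratio : r ^ 2 * (x ⬝ᵥ C⁻¹ *ᵥ x) < x ⬝ᵥ A⁻¹ *ᵥ x := by
    rw [← Real.sqrt_sq hr, ← Real.sqrt_mul (sq_nonneg r)] at h
    exact lt_of_not_ge fun hle ↦ h.not_ge (Real.sqrt_le_sqrt hle)
  have hmono : A.det * (x ⬝ᵥ A⁻¹ *ᵥ x) ≤ C.det * (x ⬝ᵥ C⁻¹ *ᵥ x) :=
    monotoneOn_det_mul_dotProduct_inv_mulVec_posDef x hA hC hAC
  have hlt : r ^ 2 * A.det * (x ⬝ᵥ C⁻¹ *ᵥ x) < C.det * (x ⬝ᵥ C⁻¹ *ᵥ x) := by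
    linarith [mul_lt_mul_of_pos_left hratio hA.det_pos]
  exact (lt_of_mul_lt_mul_right hlt (dotProduct_inv_mulVec_nonneg hC.posSemidef x)).le

theorem two_mul_log_le_log_det_sub_log_det (hA : A.PosDef) (hC : C.PosDef) (hAC : A ≤ C)
    {r : ℝ} (hr : 0 < r) {x : n → ℝ} (h : r * √(x ⬝ᵥ C⁻¹ *ᵥ x) < √(x ⬝ᵥ A⁻¹ *ᵥ x)) :
    2 * Real.log r ≤ Real.log C.det - Real.log A.det := by
  have hlog := Real.log_le_log (mul_pos (pow_pos hr 2) hA.det_pos)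
    (sq_mul_det_le_det_of_mul_sqrt_lt_sqrt hA hC hAC hr.le h)
  rw [Real.log_mul (pow_pos hr 2).ne' hA.det_pos.ne', Real.log_pow] at hlog
  push_cast at hlog
  linarith

theorem log_det_le_card_mul_log_trace_div_card [Nonempty n] (hA : A.PosDef) :
    Real.log A.det ≤ Fintype.card n * Real.log (A.trace / Fintype.card n) := by
  have hcard : (0 : ℝ) < Fintype.card n := by exact_mod_cast Fintype.card_pos
  have hdet : A.det = ∏ i, hA.1.eigenvalues i := by simpa using hA.1.det_eq_prod_eigenvalues
  have htrace : A.trace = ∑ i, hA.1.eigenvalues i := by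
    simpa using hA.1.trace_eq_sum_eigenvalues
  have hjensen := strictConcaveOn_log_Ioi.concaveOn.le_map_sum (t := univ)
    (w := fun _ ↦ (Fintype.card n : ℝ)⁻¹) (fun _ _ ↦ by positivity)
    (by simp [hcard.ne']) (fun i _ ↦ hA.eigenvalues_pos i)
  simp only [smul_eq_mul, ← mul_sum] at hjensen
  rw [hdet, htrace, Real.log_prod fun i _ ↦ (hA.eigenvalues_pos i).ne', div_eq_inv_mul]
  exact (inv_mul_le_iff₀ hcard).mp hjensen

end LoewnerOrder

section RegularizedGram

variable {ι n : Type*} [DecidableEq n]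

/-- The regularized Gram matrix `1 + ∑ i ∈ s, v i (v i)ᵀ` of a finite family of vectors; the paper's
`Λ_h^k` is the case `v = φ_h`, `s = {1, …, k - 1}`. -/
def regularizedGram (v : ι → n → ℝ) (s : Finset ι) : Matrix n n ℝ :=
  1 + ∑ i ∈ s, vecMulVec (v i) (v i)

theorem posDef_regularizedGram [Finite n] (v : ι → n → ℝ) (s : Finset ι) :
    (regularizedGram v s).PosDef :=
  PosDef.one.add_posSemidef (posSemidef_sum s fun i _ ↦ posSemidef_vecMulVec_self (v i))

theorem monotone_regularizedGram [Finite n] (v : ι → n → ℝ) :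
    Monotone (regularizedGram v) := fun _ _ hst ↦
  add_le_add_right (sum_le_sum_of_subset_of_nonneg hst fun i _ _ ↦
    (posSemidef_vecMulVec_self (v i)).nonneg) 1

variable [Fintype n]

theorem monotone_log_det_regularizedGram (v : ι → n → ℝ) :
    Monotone fun s ↦ Real.log (regularizedGram v s).det := fun s t hst ↦
  Real.log_le_log (posDef_regularizedGram v s).det_pos <|
    monotoneOn_det_posDef (posDef_regularizedGram v s) (posDef_regularizedGram v t)
      (monotone_regularizedGram v hst)

theorem log_det_regularizedGram_nonneg (v : ι → n → ℝ) (s : Finset ι) :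
    0 ≤ Real.log (regularizedGram v s).det := by
  simpa [regularizedGram] using monotone_log_det_regularizedGram v s.empty_subset

theorem trace_regularizedGram_le {v : ι → n → ℝ} {s : Finset ι} (hv : ∀ i ∈ s, v i ⬝ᵥ v i ≤ 1) :
    (regularizedGram v s).trace ≤ #s + Fintype.card n := by
  rw [regularizedGram, trace_add, trace_one, trace_sum, add_comm]
  simpa [trace_vecMulVec] using sum_le_card_nsmul s _ 1 hv

theorem log_det_regularizedGram_le [Nonempty n] {v : ι → n → ℝ} {s : Finset ι}
    (hv : ∀ i ∈ s, v i ⬝ᵥ v i ≤ 1) :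
    Real.log (regularizedGram v s).det ≤
      Fintype.card n * Real.log (#s / Fintype.card n + 1) := by
  have hcard : (0 : ℝ) < Fintype.card n := by exact_mod_cast Fintype.card_pos
  have hpos := posDef_regularizedGram v s
  refine (log_det_le_card_mul_log_trace_div_card hpos).trans ?_
  rw [div_add_one hcard.ne']
  have := hpos.trace_pos
  gcongr
  exact trace_regularizedGram_le hv

end RegularizedGram

section BatchCounting

variable {G : Type*} [AddCommGroup G] [LinearOrder G] [IsOrderedAddMonoid G]

theorem card_filter_le_sub_nsmul_le_sub {f : ℕ → G} (hf : Monotone f) {a e : ℕ} (hae : a ≤ e)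
    (c : G) : #{b ∈ Ico a e | c ≤ f (b + 1) - f b} • c ≤ f e - f a :=
  calc #{b ∈ Ico a e | c ≤ f (b + 1) - f b} • c
      ≤ ∑ b ∈ Ico a e with c ≤ f (b + 1) - f b, (f (b + 1) - f b) :=
        card_nsmul_le_sum _ _ _ fun _ hb ↦ (mem_filter.mp hb).2
    _ ≤ ∑ b ∈ Ico a e, (f (b + 1) - f b) :=
        sum_le_sum_of_subset_of_nonneg (filter_subset _ _) fun b _ _ ↦
          sub_nonneg.mpr (hf b.le_succ)
    _ = f e - f a := by
        rw [sum_Ico_eq_sum_range]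
        simpa [hae, add_assoc] using sum_range_sub (fun b ↦ f (a + b)) (e - a)

theorem card_nsmul_le_nsmul_sub_of_batches {f : ℕ → G} (hf : Monotone f) {t : ℕ → ℕ} {a e M : ℕ}
    (hae : a ≤ e) (hM : ∀ b ∈ Ico a e, t (b + 1) ≤ t b + M) {c : G} (hc : 0 ≤ c) {S : Finset ℕ}
    (hS : ∀ k ∈ S, ∃ b ∈ Ico a e, t b ≤ k ∧ k < t (b + 1) ∧ c ≤ f (b + 1) - f b) :
    #S • c ≤ M • (f e - f a) := by
  set heavy : Finset ℕ := {b ∈ Ico a e | c ≤ f (b + 1) - f b}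
  have hcover : S ⊆ heavy.biUnion fun b ↦ Ico (t b) (t (b + 1)) := fun k hk ↦ by
    obtain ⟨b, hb, htb, hkb, hcb⟩ := hS k hk
    exact mem_biUnion.mpr ⟨b, mem_filter.mpr ⟨hb, hcb⟩, mem_Ico.mpr ⟨htb, hkb⟩⟩
  have hcard : #S ≤ #heavy * M := (card_le_card hcover).trans <|
    card_biUnion_le_card_mul _ _ _ fun b hb ↦ by
      have := hM b (mem_filter.mp hb).1
      rw [Nat.card_Ico]
      omega
  calc #S • c ≤ (#heavy * M) • c := nsmul_le_nsmul_left hc hcard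
    _ = M • #heavy • c := mul_nsmul c _ _
    _ ≤ M • (f e - f a) := nsmul_le_nsmul_right (card_filter_le_sub_nsmul_le_sub hf hae c) M

end BatchCounting

theorem card_mul_two_mul_log_le_of_batches {n : Type*} [Fintype n] [DecidableEq n]
    {A : ℕ → Matrix n n ℝ} (hA : ∀ k, (A k).PosDef) (hmono : Monotone A) {t : ℕ → ℕ}
    (ht : Monotone t) {a e M : ℕ} (hae : a ≤ e) (hM : ∀ b ∈ Ico a e, t (b + 1) ≤ t b + M)
    {r : ℝ} (hr : 1 ≤ r) {x : ℕ → n → ℝ} {S : Finset ℕ}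
    (hS : ∀ k ∈ S, ∃ b ∈ Ico a e, t b ≤ k ∧ k < t (b + 1) ∧
      r * √(x k ⬝ᵥ (A k)⁻¹ *ᵥ x k) < √(x k ⬝ᵥ (A (t b))⁻¹ *ᵥ x k)) :
    #S * (2 * Real.log r) ≤ M * (Real.log (A (t e)).det - Real.log (A (t a)).det) := by
  have hlog : Monotone fun k ↦ Real.log (A k).det := fun i j hij ↦
    Real.log_le_log (hA i).det_pos (monotoneOn_det_posDef (hA i) (hA j) (hmono hij))
  have hcount := card_nsmul_le_nsmul_sub_of_batches (hlog.comp ht) hae hM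
    (c := 2 * Real.log r) (S := S) (by have := Real.log_nonneg hr; positivity) fun k hk ↦ by
      obtain ⟨b, hb, htb, hkb, hlt⟩ := hS k hk
      refine ⟨b, hb, htb, hkb, ?_⟩
      exact (two_mul_log_le_log_det_sub_log_det (hA _) (hA k) (hmono htb) (by positivity) hlt).trans
        (sub_le_sub_right (hlog hkb.le) _)
  simpa only [nsmul_eq_mul, Function.comp_apply] using hcount

theorem card_filter_mul_two_mul_log_le_regularizedGram {n : Type*} [Fintype n] [DecidableEq n]
    [Nonempty n] {v : ℕ → n → ℝ} {K B M : ℕ} (hv : ∀ k ∈ Icc 1 K, v k ⬝ᵥ v k ≤ 1) {r : ℝ}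
    (hr : 1 ≤ r) {t : ℕ → ℕ} (ht : Monotone t) (htM : ∀ b ∈ Icc 1 B, t (b + 1) ≤ t b + M)
    (htK : t (B + 1) ≤ K + 1) {bk : ℕ → ℕ}
    (hbk : ∀ k ∈ Icc 1 K, ∃ b ∈ Icc 1 B, bk k = t b ∧ t b ≤ k ∧ k < t (b + 1)) :
    #{k ∈ Icc 1 K | r * √(v k ⬝ᵥ (regularizedGram v (Icc 1 (k - 1)))⁻¹ *ᵥ v k) <
        √(v k ⬝ᵥ (regularizedGram v (Icc 1 (bk k - 1)))⁻¹ *ᵥ v k)} * (2 * Real.log r) ≤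
      M * (Fintype.card n * Real.log (K / Fintype.card n + 1)) := by
  rw [← Ico_add_one_right_eq_Icc 1 B] at htM hbk
  have hmono : Monotone fun k ↦ regularizedGram v (Icc 1 (k - 1)) := fun i j hij ↦
    monotone_regularizedGram v (Icc_subset_Icc_right (Nat.sub_le_sub_right hij 1))
  have hgrowth : Real.log (regularizedGram v (Icc 1 (t (B + 1) - 1))).det ≤
      Fintype.card n * Real.log (K / Fintype.card n + 1) := by
    have hsubset : Icc 1 (t (B + 1) - 1) ⊆ Icc 1 K := Icc_subset_Icc_right (by omega)
    simpa using (monotone_log_det_regularizedGram v hsubset).trans (log_det_regularizedGram_le hv)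
  have hstart := log_det_regularizedGram_nonneg v (Icc 1 (t 1 - 1))
  refine (card_mul_two_mul_log_le_of_batches (fun k ↦ posDef_regularizedGram v _) hmono ht
    (Nat.le_add_left 1 B) htM hr (x := v) fun k hk ↦ ?_).trans
      (mul_le_mul_of_nonneg_left (by linarith) M.cast_nonneg)
  obtain ⟨hkK, hlt⟩ := mem_filter.mp hk
  obtain ⟨b, hb, hbkb, htb, hkb⟩ := hbk k hkK
  exact ⟨b, hb, htb, hkb, hbkb ▸ hlt⟩

theorem stmt_10_general {ι n : Type*} [Fintype n] [DecidableEq n] [Nonempty n] (I : Finset ι)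
    (K B M : ℕ) {r : ℝ} (hr : 1 < r) (φ : ι → ℕ → n → ℝ)
    (hφ : ∀ i ∈ I, ∀ k ∈ Icc 1 K, √(φ i k ⬝ᵥ φ i k) ≤ 1)
    (Λ : ι → ℕ → Matrix n n ℝ)
    (hΛ : ∀ i k, Λ i k = 1 + ∑ τ ∈ Icc 1 (k - 1), vecMulVec (φ i τ) (φ i τ))
    (t : ℕ → ℕ) (ht : Monotone t) (htM : ∀ b ∈ Icc 1 B, t (b + 1) ≤ t b + M)
    (htK : t (B + 1) ≤ K + 1) (bk : ℕ → ℕ)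
    (hbk : ∀ k ∈ Icc 1 K, ∃ b ∈ Icc 1 B, bk k = t b ∧ t b ≤ k ∧ k < t (b + 1)) :
    (#{p ∈ Icc 1 K ×ˢ I | r * √(φ p.2 p.1 ⬝ᵥ (Λ p.2 p.1)⁻¹ *ᵥ φ p.2 p.1) <
        √(φ p.2 p.1 ⬝ᵥ (Λ p.2 (bk p.1))⁻¹ *ᵥ φ p.2 p.1)} : ℝ) ≤
      Fintype.card n * #I * M * Real.log (K / Fintype.card n + 1) / (2 * Real.log r) := by
  have hfiber : ∀ i ∈ I, #{k ∈ Icc 1 K | r * √(φ i k ⬝ᵥ (Λ i k)⁻¹ *ᵥ φ i k) <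
      √(φ i k ⬝ᵥ (Λ i (bk k))⁻¹ *ᵥ φ i k)} * (2 * Real.log r) ≤
      M * (Fintype.card n * Real.log (K / Fintype.card n + 1)) := fun i hi ↦ by
    simp only [hΛ]
    exact card_filter_mul_two_mul_log_le_regularizedGram
      (fun k hk ↦ Real.sqrt_le_one.mp (hφ i hi k hk)) hr.le ht htM htK hbk
  rw [le_div_iff₀ (mul_pos two_pos (Real.log_pos hr)), card_filter, sum_product_right]
  simp only [← card_filter]
  push_cast
  rw [sum_mul]
  calc _ ≤ _ := sum_le_card_nsmul I _ _ hfiber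
    _ = _ := by rw [nsmul_eq_mul]; ring

/-- With `B ∣ K`, the uniform batch grid `t_b = (b-1)(K/B) + 1`
and `b_k = t_b` for the unique `b` with `t_b ≤ k < t_{b+1}`, the set
`C = {(k,h) ∈ [K]×[H] : √(φ_h^kᵀ (Λ_h^{b_k})⁻¹ φ_h^k)
  > 2 √(φ_h^kᵀ (Λ_h^k)⁻¹ φ_h^k)}` satisfies
`|C| ≤ d H K log(K/d + 1) / (2 B log 2)`. -/
theorem stmt_10 (d H K B : ℕ) (hd : 1 ≤ d) (hH : 1 ≤ H) (hK : 1 ≤ K)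
    (hB : 1 ≤ B) (hdvd : B ∣ K)
    (φ : ℕ → ℕ → Fin d → ℝ)
    (hφ : ∀ h ∈ Finset.Icc 1 H, ∀ k ∈ Finset.Icc 1 K,
      Real.sqrt (φ h k ⬝ᵥ φ h k) ≤ 1)
    (Λ : ℕ → ℕ → Matrix (Fin d) (Fin d) ℝ)
    (hΛ : ∀ h k, Λ h k = (1 : Matrix (Fin d) (Fin d) ℝ) +
      ∑ τ ∈ Finset.Icc 1 (k - 1), Matrix.vecMulVec (φ h τ) (φ h τ))
    (t : ℕ → ℕ) (ht : ∀ b, t b = (b - 1) * (K / B) + 1)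
    (bk : ℕ → ℕ)
    (hbk : ∀ k ∈ Finset.Icc 1 K, ∃ b ∈ Finset.Icc 1 B,
      bk k = t b ∧ t b ≤ k ∧ k < t (b + 1)) :
    ((((Finset.Icc 1 K) ×ˢ (Finset.Icc 1 H)).filter (fun p =>
        2 * Real.sqrt (φ p.2 p.1 ⬝ᵥ (Λ p.2 p.1)⁻¹.mulVec (φ p.2 p.1)) <
          Real.sqrt (φ p.2 p.1 ⬝ᵥ (Λ p.2 (bk p.1))⁻¹.mulVec (φ p.2 p.1)))).card : ℝ)
      ≤ d * H * K * Real.log ((K : ℝ) / d + 1) / (2 * B * Real.log 2) := by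
  have : NeZero d := ⟨by omega⟩
  have ht_mono : Monotone t := fun a b hab ↦ by rw [ht, ht]; gcongr
  have ht_last : t (B + 1) = K + 1 := by rw [ht, Nat.add_sub_cancel, Nat.mul_div_cancel' hdvd]
  have ht_step : ∀ b ∈ Icc 1 B, t (b + 1) ≤ t b + K / B := fun b hb ↦ by
    obtain ⟨c, rfl⟩ := Nat.exists_eq_add_of_le' (mem_Icc.mp hb).1
    simp only [ht, Nat.add_sub_cancel]
    exact (by ring : (c + 1) * (K / B) + 1 = c * (K / B) + 1 + K / B).le
  convert stmt_10_general (Icc 1 H) K B (K / B) one_lt_two φ hφ Λ hΛ t ht_mono ht_step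
    ht_last.le bk hbk using 1
  rw [Fintype.card_fin, Nat.card_Icc, Nat.add_sub_cancel, Nat.cast_div hdvd (by positivity)]
  field_simp
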